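/- $\frac{2}{\pi}\int_0^\pi \mathrm{Re}\,\mathrm{Li}_2(4\sin^2\theta)\,d\theta = 2\zeta(2) = \frac{\pi^2}{3}$, where $\mathrm{Li}_2$ denotes the (analytically continued) dilogarithm and $\mathrm{Re}\,\mathrm{Li}_2$ its real part on $[0,\infty)$. -/

import Mathlib

open Real

/-- The real part of the (analytically continued) dilogarithm on `[0, ∞)`:
for `x ≤ 1` it is the convergent series, and for `x > 1` it is given by the
functional equation `Re Li₂(x) = 2ζ(2) - Li₂(1/x) - (1/2) log² x`. -/
noncomputable def reLi2 (x : ℝ) : ℝ :=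
  if x ≤ 1 then ∑' n : ℕ, x^(n+1) / ((n:ℝ)+1)^2
  else π^2/3 - (∑' n : ℕ, (1/x)^(n+1) / ((n:ℝ)+1)^2) - (1/2) * (Real.log x)^2

open MeasureTheory Set Filter intervalIntegral ComplexConjugate

/-- The dilogarithm series. -/
noncomputable def dilogSeries (x : ℝ) : ℝ := ∑' n : ℕ, x ^ (n + 1) / ((n : ℝ) + 1) ^ 2

lemma hasSum_one_div_succ_sq : HasSum (fun n : ℕ => 1 / ((n : ℝ) + 1) ^ 2) (π ^ 2 / 6) := by
  have h := (hasSum_nat_add_iff' 1).2 hasSum_zeta_two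
  simpa using h

lemma norm_pow_div_succ_sq_le {x : ℝ} (hx : x ∈ Icc (-1) 1) (n : ℕ) :
    ‖x ^ (n + 1) / ((n : ℝ) + 1) ^ 2‖ ≤ 1 / ((n : ℝ) + 1) ^ 2 := by
  rw [norm_div, norm_pow, Real.norm_eq_abs, Real.norm_eq_abs,
    abs_of_nonneg (by positivity : (0 : ℝ) ≤ ((n : ℝ) + 1) ^ 2)]
  gcongr
  exact pow_le_one₀ (abs_nonneg x) (abs_le.2 hx)

lemma continuousOn_dilogSeries : ContinuousOn dilogSeries (Icc (-1) 1) :=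
  continuousOn_tsum (fun n => by fun_prop) hasSum_one_div_succ_sq.summable
    fun n _ hx => norm_pow_div_succ_sq_le hx n

lemma dilogSeries_zero : dilogSeries 0 = 0 := by simp [dilogSeries]

lemma dilogSeries_one : dilogSeries 1 = π ^ 2 / 6 := by
  simpa [dilogSeries] using hasSum_one_div_succ_sq.tsum_eq

lemma dilogSeries_neg_one : dilogSeries (-1) = -(π ^ 2 / 12) := by
  have hsum (x : ℝ) (hx : x ∈ Icc (-1) 1) :
      HasSum (fun n : ℕ => x ^ (n + 1) / ((n : ℝ) + 1) ^ 2) (dilogSeries x) :=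
    (Summable.of_norm_bounded hasSum_one_div_succ_sq.summable
      (norm_pow_div_succ_sq_le hx)).hasSum
  have h := (hsum 1 (by norm_num)).add (hsum (-1) (by norm_num))
  have hodd (k : ℕ) : (1 : ℝ) ^ (2 * k + 1 + 1) / (((2 * k + 1 : ℕ) : ℝ) + 1) ^ 2
      + (-1) ^ (2 * k + 1 + 1) / (((2 * k + 1 : ℕ) : ℝ) + 1) ^ 2
      = 1 / 2 * (1 / ((k : ℝ) + 1) ^ 2) := by
    have hk : (((2 * k + 1 : ℕ) : ℝ) + 1) = 2 * (k + 1) := by push_cast; ring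
    rw [Even.neg_one_pow ⟨k + 1, by ring⟩, hk]
    field_simp
    norm_num
  have heven (k : ℕ) : (1 : ℝ) ^ (2 * k + 1) / (((2 * k : ℕ) : ℝ) + 1) ^ 2
      + (-1) ^ (2 * k + 1) / (((2 * k : ℕ) : ℝ) + 1) ^ 2 = 0 := by
    rw [Odd.neg_one_pow ⟨k, rfl⟩]
    ring
  have := h.unique (HasSum.even_add_odd (by simpa only [heven] using hasSum_zero)
    (by simpa only [hodd] using hasSum_one_div_succ_sq.mul_left (1 / 2)))
  rw [dilogSeries_one] at this
  linarith

lemma hasDerivAt_dilogSeries {x : ℝ} (hx : x ∈ Ioo (-1) 1) (hx0 : x ≠ 0) :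
    HasDerivAt dilogSeries (-log (1 - x) / x) x := by
  have hx1 : |x| < 1 := abs_lt.2 hx
  obtain ⟨r, hxr, hr1⟩ := exists_between hx1
  have hr0 : 0 < r := (abs_nonneg x).trans_lt hxr
  have h : HasDerivAt dilogSeries (∑' n : ℕ, x ^ n / ((n : ℝ) + 1)) x := by
    refine hasDerivAt_tsum_of_isPreconnected (t := Ioo (-r) r) (y₀ := 0)
      (g := fun (n : ℕ) (x : ℝ) => x ^ (n + 1) / ((n : ℝ) + 1) ^ 2)
      (g' := fun (n : ℕ) (x : ℝ) => x ^ n / ((n : ℝ) + 1))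
      (summable_geometric_of_lt_one hr0.le hr1) isOpen_Ioo isPreconnected_Ioo ?_ ?_
      (by simpa using hr0) (by simp [summable_zero]) (abs_lt.1 hxr)
    · intro n y _
      refine ((hasDerivAt_pow (n + 1) y).div_const (((n : ℝ) + 1) ^ 2)).congr_deriv ?_
      push_cast
      field_simp
    · intro n y hy
      rw [norm_div, norm_pow, Real.norm_eq_abs, Real.norm_eq_abs,
        abs_of_nonneg (by positivity : (0 : ℝ) ≤ (n : ℝ) + 1)]
      refine (div_le_self (by positivity) (by linarith [n.cast_nonneg (α := ℝ)])).trans ?_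
      exact pow_le_pow_left₀ (abs_nonneg y) (abs_lt.2 hy).le n
  refine h.congr_deriv ?_
  rw [← (hasSum_pow_div_log_of_abs_lt_one hx1).tsum_eq, ← tsum_div_const]
  congr 1 with n
  field_simp
  ring

/-- Landen's identity. -/
lemma dilogSeries_one_sub_add {s : ℝ} (hs : s ∈ Icc (1 / 2) 1) :
    dilogSeries (1 - s) + dilogSeries (1 - s⁻¹) + log s ^ 2 / 2 = 0 := by
  have hmaps₁ : MapsTo (fun s : ℝ => 1 - s) (Icc (1 / 2) 1) (Icc (-1) 1) := fun t ht => by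
    constructor <;> linarith [ht.1, ht.2]
  have hmaps₂ : MapsTo (fun s : ℝ => 1 - s⁻¹) (Icc (1 / 2) 1) (Icc (-1) 1) := fun t ht => by
    have h0 : 0 < t := by linarith [ht.1]
    have h1 : t⁻¹ ≤ 2 := by rw [inv_le_comm₀ h0 two_pos]; linarith [ht.1]
    have h2 : 0 < t⁻¹ := inv_pos.2 h0
    constructor <;> linarith
  have hne : ∀ t ∈ Icc (1 / 2 : ℝ) 1, t ≠ 0 := fun t ht => by linarith [ht.1]
  have hcont : ContinuousOn
      (fun s => dilogSeries (1 - s) + dilogSeries (1 - s⁻¹) + log s ^ 2 / 2) (Icc (1 / 2) 1) := by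
    refine ((continuousOn_dilogSeries.comp (by fun_prop) hmaps₁).add
      (continuousOn_dilogSeries.comp ?_ hmaps₂)).add ?_
    · exact continuousOn_const.sub (continuousOn_inv₀.mono hne)
    · exact ((continuousOn_log.mono hne).pow 2).div_const 2
  have hderiv : ∀ t ∈ Ioo (1 / 2 : ℝ) 1, HasDerivAt
      (fun s => dilogSeries (1 - s) + dilogSeries (1 - s⁻¹) + log s ^ 2 / 2) 0 t := by
    intro t ht
    have h0 : 0 < t := by linarith [ht.1]
    have h1 : 1 < t⁻¹ := (one_lt_inv₀ h0).2 ht.2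
    have h2 : t⁻¹ < 2 := by rw [inv_lt_comm₀ h0 two_pos]; linarith [ht.1]
    have ht1 : 1 - t ≠ 0 := by linarith [ht.2]
    have ht2 : t - 1 ≠ 0 := by linarith [ht.2]
    have d₁ := (hasDerivAt_dilogSeries (x := 1 - t)
      ⟨by linarith [ht.2], by linarith⟩ ht1).comp t ((hasDerivAt_id t).const_sub 1)
    have d₂ := (hasDerivAt_dilogSeries (x := 1 - t⁻¹)
      ⟨by linarith, by linarith⟩ (by linarith)).comp t ((hasDerivAt_inv h0.ne').const_sub 1)
    have d₃ := ((hasDerivAt_log h0.ne').pow 2).div_const 2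
    refine ((d₁.add d₂).add d₃).congr_deriv ?_
    rw [sub_sub_cancel, sub_sub_cancel, log_inv]
    have : 1 - t⁻¹ = (t - 1) / t := by field_simp
    rw [this]
    have : 1 - t = -(t - 1) := by ring
    rw [this]
    field_simp
    norm_num
    ring
  have h := integral_eq_sub_of_hasDerivAt_of_le hs.2 (hcont.mono (Icc_subset_Icc_left hs.1))
    (fun t ht => hderiv t (Ioo_subset_Ioo_left hs.1 ht)) intervalIntegrable_const
  simp only [intervalIntegral.integral_zero, sub_self, inv_one, dilogSeries_zero, log_one] at h
  linarith

lemma dilogSeries_half : dilogSeries (1 / 2) = π ^ 2 / 12 - log 2 ^ 2 / 2 := by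
  have h := dilogSeries_one_sub_add (s := 1 / 2) (by norm_num)
  have hlog : log (1 / 2) = -log 2 := by rw [one_div, log_inv]
  have h1 : (1 : ℝ) - 1 / 2 = 1 / 2 := by norm_num
  have h2 : (1 : ℝ) - (1 / 2)⁻¹ = -1 := by norm_num
  rw [hlog, h1, h2, dilogSeries_neg_one, neg_sq] at h
  linarith

lemma reLi2_of_le_one {x : ℝ} (hx : x ≤ 1) : reLi2 x = dilogSeries x := if_pos hx

lemma reLi2_of_one_le {x : ℝ} (hx : 1 ≤ x) :
    reLi2 x = π ^ 2 / 3 - dilogSeries x⁻¹ - 1 / 2 * log x ^ 2 := by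
  rcases hx.eq_or_lt with rfl | hx
  · rw [reLi2_of_le_one le_rfl, inv_one, dilogSeries_one, log_one]
    ring
  · simp [reLi2, dilogSeries, hx.not_ge]

lemma continuousOn_reLi2 : ContinuousOn reLi2 (Ici 0) := by
  have h : Ici (0 : ℝ) = Icc 0 1 ∪ Ici 1 := (Icc_union_Ici_eq_Ici zero_le_one).symm
  rw [h]
  refine ContinuousOn.union_of_isClosed ?_ ?_ isClosed_Icc isClosed_Ici
  · exact (continuousOn_dilogSeries.mono (Icc_subset_Icc_left (by norm_num))).congr
      fun x hx => reLi2_of_le_one hx.2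
  · have hne : ∀ x ∈ Ici (1 : ℝ), x ≠ 0 := fun x hx => (zero_lt_one.trans_le hx).ne'
    refine ContinuousOn.congr ?_ fun x hx => reLi2_of_one_le hx
    refine (continuousOn_const.sub (continuousOn_dilogSeries.comp
      (continuousOn_inv₀.mono hne) fun x hx => ?_)).sub
      (((continuousOn_log.mono hne).pow 2).const_smul (1 / 2 : ℝ))
    have : (0 : ℝ) < x⁻¹ := inv_pos.2 (zero_lt_one.trans_le hx)
    exact ⟨by linarith, inv_le_one_of_one_le₀ hx⟩

lemma hasDerivAt_reLi2 {x : ℝ} (hx0 : 0 < x) (hx1 : x ≠ 1) :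
    HasDerivAt reLi2 (-log (1 - x) / x) x := by
  rcases hx1.lt_or_gt with hx | hx
  · refine (hasDerivAt_dilogSeries ⟨by linarith, hx⟩ hx0.ne').congr_of_eventuallyEq ?_
    filter_upwards [Iio_mem_nhds hx] with y hy using reLi2_of_le_one hy.le
  · have hinv : x⁻¹ < 1 := inv_lt_one_of_one_lt₀ hx
    have hinv0 : 0 < x⁻¹ := inv_pos.2 hx0
    have d₁ := (hasDerivAt_dilogSeries (x := x⁻¹) ⟨by linarith, hinv⟩ hinv0.ne').comp x
      (hasDerivAt_inv hx0.ne')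
    have d₂ := ((hasDerivAt_log hx0.ne').pow 2).const_mul (1 / 2 : ℝ)
    have d := (d₁.const_sub (π ^ 2 / 3)).sub d₂
    have hlog : log (1 - x⁻¹) = log (1 - x) - log x := by
      rw [← log_div (by linarith) hx0.ne', ← log_neg_eq_log ((1 - x) / x)]
      congr 1
      field_simp
      ring
    refine HasDerivAt.congr_of_eventuallyEq (f := fun x => π ^ 2 / 3 - dilogSeries x⁻¹ -
      1 / 2 * log x ^ 2) ?_ ?_
    · refine d.congr_deriv ?_
      rw [hlog]
      field_simp
      norm_num
      ring
    · filter_upwards [Ioi_mem_nhds hx] with y hy using reLi2_of_one_le (le_of_lt hy)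

lemma intervalIntegrable_log_one_sub_div {x : ℝ} (hx : 0 ≤ x) :
    IntervalIntegrable (fun t => -log (1 - t) / t) volume 0 x := by
  have h₁ : IntervalIntegrable (fun t => -log (1 - t) / t) volume 0 1 := by
    refine intervalIntegrable_deriv_of_nonneg (g := reLi2) ?_ ?_ ?_
    · exact continuousOn_reLi2.mono (by rw [uIcc_of_le zero_le_one]; exact Icc_subset_Ici_self)
    all_goals
      intro t ht
      rw [min_eq_left zero_le_one, max_eq_right zero_le_one] at ht
    · exact hasDerivAt_reLi2 ht.1 ht.2.ne
    · exact div_nonneg (neg_nonneg.2 (log_nonpos (by linarith [ht.2]) (by linarith [ht.1]))) ht.1.le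
  have h₂ (y : ℝ) (hy : 1 ≤ y) : IntervalIntegrable (fun t => -log (1 - t) / t) volume 1 y := by
    have hlog : IntervalIntegrable (fun t => log (1 - t)) volume 1 y := by
      simpa using (intervalIntegrable_log' (a := 0) (b := 1 - y)).comp_sub_left 1
    simp_rw [div_eq_mul_inv]
    refine hlog.neg.mul_continuousOn (continuousOn_inv₀.mono fun t ht => ?_)
    rw [uIcc_of_le hy] at ht
    exact (zero_lt_one.trans_le ht.1).ne'
  rcases le_total x 1 with h | h
  · refine h₁.mono_set ?_
    rw [uIcc_of_le hx, uIcc_of_le zero_le_one]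
    exact Icc_subset_Icc_right h
  · exact h₁.trans (h₂ x h)

lemma integral_log_one_sub_div {x : ℝ} (hx : 0 ≤ x) :
    ∫ t in 0..x, -log (1 - t) / t = reLi2 x := by
  rw [MeasureTheory.integral_eq_of_hasDerivAt_off_countable_of_le reLi2 _ hx
    (countable_singleton 1) (continuousOn_reLi2.mono Icc_subset_Ici_self)
    (fun t ht => hasDerivAt_reLi2 ht.1.1 ht.2) (intervalIntegrable_log_one_sub_div hx),
    reLi2_of_le_one zero_le_one, dilogSeries_zero, sub_zero]

lemma mul_neg_log_div_mul (u x : ℝ) :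
    x * (-log (1 - u * x) / (u * x)) = -log (1 - u * x) / u := by
  rcases eq_or_ne x 0 with rfl | hx
  · simp
  · field_simp

lemma integral_log_one_sub_mul_div {x : ℝ} (hx : 0 ≤ x) :
    ∫ u in 0..1, -log (1 - u * x) / u = reLi2 x := by
  rw [← integral_log_one_sub_div hx]
  simp_rw [← mul_neg_log_div_mul _ x]
  rw [intervalIntegral.integral_const_mul]
  simpa using smul_integral_comp_mul_right (a := 0) (b := 1) (fun t => -log (1 - t) / t) x

lemma integral_abs_log_one_sub_mul_div {x : ℝ} (hx : 0 ≤ x) :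
    ∫ u in 0..1, ‖-log (1 - u * x) / u‖ = ∫ t in 0..x, ‖-log (1 - t) / t‖ := by
  simp_rw [← mul_neg_log_div_mul _ x, norm_mul, Real.norm_of_nonneg hx]
  rw [intervalIntegral.integral_const_mul]
  simpa using smul_integral_comp_mul_right (a := 0) (b := 1) (fun t => ‖-log (1 - t) / t‖) x

lemma intervalIntegrable_log_one_sub_mul_div {x : ℝ} (hx : 0 ≤ x) :
    IntervalIntegrable (fun u => -log (1 - u * x) / u) volume 0 1 := by
  rcases hx.eq_or_lt with rfl | hx
  · simp
  have h := (intervalIntegrable_log_one_sub_div hx.le).comp_mul_right (c := x)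
  simp only [zero_div, div_self hx.ne'] at h
  simpa only [mul_neg_log_div_mul] using h.const_mul x

lemma four_mul_sin_sq_mem (θ : ℝ) : 4 * sin θ ^ 2 ∈ Icc (0 : ℝ) 4 :=
  ⟨by positivity, by linarith [sin_sq_le_one θ]⟩

lemma integrable_log_one_sub_mul_sin_sq_div :
    Integrable (fun p : ℝ × ℝ => -log (1 - p.2 * (4 * sin p.1 ^ 2)) / p.2)
      ((volume.restrict (Ioc 0 π)).prod (volume.restrict (Ioc 0 1))) := by
  have hmeas : AEStronglyMeasurable
      (fun p : ℝ × ℝ => -log (1 - p.2 * (4 * sin p.1 ^ 2)) / p.2)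
      ((volume.restrict (Ioc 0 π)).prod (volume.restrict (Ioc 0 1))) :=
    Measurable.aestronglyMeasurable (by fun_prop)
  refine (integrable_prod_iff hmeas).2 ⟨.of_forall fun θ => ?_, ?_⟩
  · exact (intervalIntegrable_iff_integrableOn_Ioc_of_le zero_le_one).1
      (intervalIntegrable_log_one_sub_mul_div (four_mul_sin_sq_mem θ).1)
  · refine Integrable.of_bound hmeas.norm.integral_prod_right'
      (∫ t in 0..4, ‖-log (1 - t) / t‖) (.of_forall fun θ => ?_)
    obtain ⟨h0, h4⟩ := four_mul_sin_sq_mem θ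
    rw [← intervalIntegral.integral_of_le zero_le_one, integral_abs_log_one_sub_mul_div h0,
      Real.norm_of_nonneg (integral_nonneg h0 fun _ _ => norm_nonneg _)]
    exact integral_mono_interval le_rfl h0 h4 (.of_forall fun _ => norm_nonneg _)
      (intervalIntegrable_log_one_sub_div (by norm_num)).norm

lemma integral_reLi2_eq :
    ∫ θ in 0..π, reLi2 (4 * sin θ ^ 2) =
      ∫ u in 0..1, -(∫ θ in 0..π, log (1 - u * (4 * sin θ ^ 2))) / u := by
  simp_rw [← fun θ => integral_log_one_sub_mul_div (four_mul_sin_sq_mem θ).1]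
  rw [intervalIntegral_intervalIntegral_swap]
  · simp_rw [intervalIntegral.integral_div, intervalIntegral.integral_neg]
  · rw [uIoc_of_le pi_pos.le, uIoc_of_le zero_le_one]
    rw [IntegrableOn, Measure.volume_eq_prod, ← Measure.prod_restrict]
    exact integrable_log_one_sub_mul_sin_sq_div

lemma setOf_add_ne_zero_mem_codiscreteWithin (b : ℂ) (U : Set ℂ) :
    {z : ℂ | z + b ≠ 0} ∈ codiscreteWithin U := by
  refine codiscreteWithin_iff_locallyFiniteComplementWithin.2 fun z _ => ⟨univ, univ_mem, ?_⟩
  refine (finite_singleton (-b)).subset fun w hw => ?_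
  simpa [add_eq_zero_iff_eq_neg] using hw.2.2

/-- The mean of `log |1 - 4 u sin² θ|`, for `u = s (1 - s)`. -/
lemma integral_log_one_sub_mul_sin_sq {s : ℂ} {u : ℝ} (hu : s * (1 - s) = u) (hs0 : s ≠ 0)
    (hs : ‖1 - s‖ ≤ ‖s‖) :
    ∫ θ in 0..π, log (1 - u * (4 * sin θ ^ 2)) = 2 * π * log ‖s‖ := by
  set a : ℂ := (1 - s) / s with ha
  have ha1 : ‖a‖ ≤ 1 := by
    rw [ha, norm_div]
    exact div_le_one_of_le₀ hs (norm_nonneg s)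
  have hposLog : log⁺ ‖a‖ = 0 := (posLog_eq_zero_iff _).2 (by simpa using ha1)
  have hcirc : Real.circleAverage (fun z : ℂ => log ‖s ^ 2 * ((z + a) * (z + conj a))‖) 0 1 =
      2 * log ‖s‖ := by
    calc
      _ = Real.circleAverage (fun z : ℂ => 2 * log ‖s‖ + (log ‖z + a‖ + log ‖z + conj a‖)) 0 1 := by
        refine circleAverage_congr_codiscreteWithin ?_ one_ne_zero
        filter_upwards [setOf_add_ne_zero_mem_codiscreteWithin a _,
          setOf_add_ne_zero_mem_codiscreteWithin (conj a) _] with z hz₁ hz₂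
        rw [norm_mul, norm_mul, norm_pow, log_mul (by simpa using hs0)
          (mul_ne_zero (norm_ne_zero_iff.2 hz₁) (norm_ne_zero_iff.2 hz₂)), log_pow,
          log_mul (norm_ne_zero_iff.2 hz₁) (norm_ne_zero_iff.2 hz₂), Nat.cast_ofNat]
      _ = 2 * log ‖s‖ := by
        have hi (b : ℂ) : CircleIntegrable (fun z : ℂ => log ‖z + b‖) 0 1 := by
          simpa using circleIntegrable_log_norm_sub_const (a := -b) (c := 0) 1
        rw [circleAverage_fun_add (circleIntegrable_const _ _ _) (CircleIntegrable.fun_add (hi _) (hi _)),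
          circleAverage_fun_add (hi _) (hi _), circleAverage_log_norm_add_const_eq_posLog,
          circleAverage_log_norm_add_const_eq_posLog, circleAverage_const,
          RCLike.norm_conj, hposLog]
        ring
  have hnorm (θ : ℝ) : ‖s ^ 2 * ((circleMap 0 1 (θ * 2) + a) * (circleMap 0 1 (θ * 2) + conj a))‖ =
      |1 - u * (4 * sin θ ^ 2)| := by
    set z := circleMap 0 1 (θ * 2) with hz
    have hzexp : z = Complex.exp (((θ * 2 : ℝ) : ℂ) * Complex.I) := by simp [hz, circleMap]
    have hzz : z * conj z = 1 := by
      rw [Complex.mul_conj, Complex.normSq_eq_norm_sq, hzexp, Complex.norm_exp_ofReal_mul_I]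
      simp
    have hre : z + conj z = ((2 - 4 * sin θ ^ 2 : ℝ) : ℂ) := by
      rw [Complex.add_conj, hzexp, Complex.exp_ofReal_mul_I_re, mul_comm θ, cos_two_mul, cos_sq']
      congr 1
      ring
    have hconj : ‖z + conj a‖ = ‖conj z + a‖ := by
      rw [← RCLike.norm_conj (z + conj a), map_add, Complex.conj_conj]
    have hsa : s * a = 1 - s := mul_div_cancel₀ _ hs0
    have key : s ^ 2 * ((z + a) * (conj z + a)) = ((1 - u * (4 * sin θ ^ 2) : ℝ) : ℂ) := by
      push_cast at hre ⊢
      linear_combination s ^ 2 * hzz + s * (z + conj z) * hsa + (s * a + 1 - s) * hsa +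
        u * hre + (z + conj z - 2) * hu
    rw [norm_mul, norm_mul, hconj, ← norm_mul, ← norm_mul, key, Complex.norm_real,
      Real.norm_eq_abs]
  have h := smul_integral_comp_mul_right (a := 0) (b := π)
    (fun θ : ℝ => log ‖s ^ 2 * ((circleMap 0 1 θ + a) * (circleMap 0 1 θ + conj a))‖) 2
  simp only [hnorm, log_abs, zero_mul, smul_eq_mul] at h
  rw [Real.circleAverage_def, mul_comm 2 π, ← h, smul_eq_mul] at hcirc
  generalize ∫ θ in 0..π, log (1 - u * (4 * sin θ ^ 2)) = I at hcirc ⊢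
  field_simp at hcirc
  linarith

lemma integral_log_one_sub_mul_sin_sq_of_le {u : ℝ} (hu0 : 0 ≤ u) (hu : u ≤ 1 / 4) :
    ∫ θ in 0..π, log (1 - u * (4 * sin θ ^ 2)) = 2 * π * log ((1 + √(1 - 4 * u)) / 2) := by
  have hsq : √(1 - 4 * u) ^ 2 = 1 - 4 * u := sq_sqrt (by linarith)
  set q := √(1 - 4 * u)
  have hq : 0 ≤ q := sqrt_nonneg _
  have hq1 : q ≤ 1 := by nlinarith
  have h := integral_log_one_sub_mul_sin_sq (s := ((1 + q) / 2 : ℝ)) (u := u) ?_ ?_ ?_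
  · rwa [Complex.norm_real, Real.norm_of_nonneg (by positivity)] at h
  · rw [← Complex.ofReal_one, ← Complex.ofReal_sub, ← Complex.ofReal_mul]
    congr 1
    linarith
  · exact Complex.ofReal_ne_zero.2 (by positivity)
  · rw [← Complex.ofReal_one, ← Complex.ofReal_sub, Complex.norm_real, Complex.norm_real,
      Real.norm_of_nonneg (by linarith), Real.norm_of_nonneg (by positivity)]
    linarith

lemma integral_log_one_sub_mul_sin_sq_of_ge {u : ℝ} (hu : 1 / 4 ≤ u) :
    ∫ θ in 0..π, log (1 - u * (4 * sin θ ^ 2)) = π * log u := by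
  have hsq : √(u - 1 / 4) ^ 2 = u - 1 / 4 := sq_sqrt (by linarith)
  set q := √(u - 1 / 4)
  have hu0 : 0 < u := by linarith
  have hnorm : ‖(⟨1 / 2, q⟩ : ℂ)‖ = √u := by
    rw [Complex.norm_def, Complex.normSq_mk]
    congr 1
    linarith
  have hsub : 1 - (⟨1 / 2, q⟩ : ℂ) = ⟨1 / 2, -q⟩ := by
    apply Complex.ext <;> norm_num
  have h := integral_log_one_sub_mul_sin_sq (s := ⟨1 / 2, q⟩) (u := u) ?_ ?_ ?_
  · rw [h, hnorm, log_sqrt hu0.le]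
    ring
  · rw [hsub]
    apply Complex.ext
    · simp
      linarith
    · simp
      ring
  · rw [← norm_ne_zero_iff, hnorm]
    positivity
  · rw [hsub, Complex.norm_def, Complex.norm_def, Complex.normSq_mk, Complex.normSq_mk, neg_mul_neg]

lemma integral_zero_quarter :
    ∫ u in 0..(1 / 4 : ℝ), -(2 * log ((1 + √(1 - 4 * u)) / 2)) / u =
      π ^ 2 / 6 - 2 * log 2 ^ 2 := by
  have hmem {u : ℝ} (hu : u ∈ Icc 0 (1 / 4)) :
      √(1 - 4 * u) ∈ Icc (0 : ℝ) 1 :=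
    ⟨sqrt_nonneg _, sqrt_le_one.2 (by linarith [hu.1])⟩
  set s : ℝ → ℝ := fun u => (1 + √(1 - 4 * u)) / 2 with hs
  have hs_cont : Continuous s := by fun_prop
  set F : ℝ → ℝ := fun u => 2 * dilogSeries (1 - s u) - log (s u) ^ 2 with hF
  have hcont : ContinuousOn F (Icc 0 (1 / 4)) := by
    refine ((continuousOn_dilogSeries.comp (by fun_prop) fun u hu => ?_).const_smul
      (2 : ℝ)).sub (ContinuousOn.pow (ContinuousOn.log hs_cont.continuousOn fun u hu => ?_) 2)
    · simp only [hs]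
      constructor <;> linarith [(hmem hu).1, (hmem hu).2]
    · simp only [hs]
      linarith [(hmem hu).1]
  have hderiv : ∀ u ∈ Ioo (0 : ℝ) (1 / 4), HasDerivAt F (-(2 * log (s u)) / u) u := by
    intro u hu
    have hpos : 0 < 1 - 4 * u := by linarith [hu.2]
    have hsq : √(1 - 4 * u) ^ 2 = 1 - 4 * u := sq_sqrt hpos.le
    have hq0 : 0 < √(1 - 4 * u) := sqrt_pos.2 hpos
    have hq1 : √(1 - 4 * u) < 1 := by nlinarith [hu.1]
    have hs0 : 0 < s u := by simp only [hs]; positivity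
    have hs1 : 0 < 1 - s u := by simp only [hs]; linarith
    have hus : u = s u * (1 - s u) := by simp only [hs]; linarith
    have hqs : √(1 - 4 * u) = 2 * s u - 1 := by simp only [hs]; ring
    have ds : HasDerivAt s (-1 / √(1 - 4 * u)) u := by
      refine (((((hasDerivAt_id u).const_mul 4).const_sub 1).sqrt hpos.ne').const_add 1
        |>.div_const 2).congr_deriv ?_
      simp only [id]
      field_simp
      norm_num
    have d₁ := ((hasDerivAt_dilogSeries (x := 1 - s u) ⟨by linarith, by linarith⟩ hs1.ne').comp u
      (ds.const_sub 1)).const_mul 2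
    refine (d₁.sub ((ds.log hs0.ne').pow 2)).congr_deriv ?_
    rw [sub_sub_cancel]
    have hq : 2 * s u - 1 ≠ 0 := by rw [← hqs]; exact hq0.ne'
    have : -(2 * log (s u)) / u = -(2 * log (s u)) / (s u * (1 - s u)) := by rw [← hus]
    rw [this, hqs]
    field_simp
    norm_num
    ring
  have hle : (0 : ℝ) ≤ 1 / 4 := by norm_num
  have hint : IntervalIntegrable (fun u => -(2 * log (s u)) / u) volume 0 (1 / 4) := by
    refine intervalIntegrable_deriv_of_nonneg (g := F) (by rwa [uIcc_of_le hle]) ?_ ?_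
    all_goals rw [min_eq_left hle, max_eq_right hle]
    · exact hderiv
    · intro u hu
      have h := hmem (Ioo_subset_Icc_self hu)
      have : log (s u) ≤ 0 := log_nonpos (by simp only [hs]; linarith [h.1])
        (by simp only [hs]; linarith [h.2])
      exact div_nonneg (by linarith) hu.1.le
  rw [integral_eq_sub_of_hasDerivAt_of_le hle hcont hderiv hint]
  have hs0 : s 0 = 1 := by simp [hs]
  have hs1 : s (1 / 4) = 1 / 2 := by norm_num [hs]
  have h1 : (1 : ℝ) - 1 / 2 = 1 / 2 := by norm_num
  simp only [hF, hs0, hs1, h1, dilogSeries_half, sub_self, dilogSeries_zero, log_one]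
  rw [one_div, log_inv]
  ring

lemma integral_quarter_one :
    ∫ u in (1 / 4 : ℝ)..1, -log u / u = 2 * log 2 ^ 2 := by
  have hle : (1 / 4 : ℝ) ≤ 1 := by norm_num
  have hne : ∀ u ∈ uIcc (1 / 4 : ℝ) 1, u ≠ 0 := fun u hu => by
    rw [uIcc_of_le hle] at hu
    linarith [hu.1]
  rw [integral_eq_sub_of_hasDerivAt (f := fun u => -(log u ^ 2) / 2)]
  · have : log (1 / 4) = -(2 * log 2) := by
      rw [one_div, log_inv, show (4 : ℝ) = 2 ^ 2 by norm_num, log_pow, Nat.cast_ofNat]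
    simp only [this, log_one]
    ring
  · intro u hu
    refine (((hasDerivAt_log (hne u hu)).pow 2).neg.div_const 2).congr_deriv ?_
    have := hne u hu
    field_simp
    norm_num
  · exact (((continuousOn_log.mono hne).neg).div continuousOn_id hne).intervalIntegrable

theorem dilog_integral_eval :
    (2/π) * ∫ θ in (0:ℝ)..π, reLi2 (4 * (Real.sin θ)^2) = π^2 / 3 := by
  have h₁ : EqOn (fun u => -(∫ θ in 0..π, log (1 - u * (4 * sin θ ^ 2))) / u)
      (fun u => π * (-(2 * log ((1 + √(1 - 4 * u)) / 2)) / u)) (uIcc 0 (1 / 4)) := by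
    intro u hu
    rw [uIcc_of_le (by norm_num)] at hu
    simp only [integral_log_one_sub_mul_sin_sq_of_le hu.1 hu.2]
    ring
  have h₂ : EqOn (fun u => -(∫ θ in 0..π, log (1 - u * (4 * sin θ ^ 2))) / u)
      (fun u => π * (-log u / u)) (uIcc (1 / 4) 1) := by
    intro u hu
    rw [uIcc_of_le (by norm_num)] at hu
    simp only [integral_log_one_sub_mul_sin_sq_of_ge hu.1]
    ring
  have hint : IntervalIntegrable (fun u => -(∫ θ in 0..π, log (1 - u * (4 * sin θ ^ 2))) / u)
      volume 0 1 := by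
    rw [intervalIntegrable_iff_integrableOn_Ioc_of_le zero_le_one]
    refine integrable_log_one_sub_mul_sin_sq_div.integral_prod_right.congr (.of_forall fun u => ?_)
    simp only [← intervalIntegral.integral_of_le pi_pos.le, intervalIntegral.integral_div,
      intervalIntegral.integral_neg]
  have hmem : (1 / 4 : ℝ) ∈ uIcc (0 : ℝ) 1 := by
    rw [uIcc_of_le zero_le_one]
    norm_num
  rw [integral_reLi2_eq, ← integral_add_adjacent_intervals
      (hint.mono_set (uIcc_subset_uIcc_left hmem)) (hint.mono_set (uIcc_subset_uIcc_right hmem)),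
    integral_congr h₁, integral_congr h₂, intervalIntegral.integral_const_mul,
    intervalIntegral.integral_const_mul, integral_zero_quarter, integral_quarter_one]
  field_simp
  ring
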